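/- arXiv:2507.18555 — 2 statements merged into one kernel-verified Lean document; each statement's English description precedes it below -/
import Mathlib

section
/- Let d ≥ 1 and let Z be a standard Gaussian random vector in ℝ^d. For all nonzero x, y ∈ ℝ^d, the kernel k(x,y) = E_Z[relu(⟨x,Z⟩)·relu(⟨y,Z⟩)] satisfies k(x,y) = |x||y|/(2π) + ⟨x,y⟩/4 + ⟨x,y⟩²/(4π|x||y|) + (1/(2π))·Σ_{n=1}^∞ C(2n,n)·⟨x,y⟩^{2n+2} / (2^{2n}(2n+1)(2n+2)(|x||y|)^{2n+1}), where C(2n,n) is the central binomial coefficient, and the infinite series converges absolutely. -/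
open MeasureTheory Real

/-- The standard Gaussian measure on `ℝ^d`. -/
noncomputable def stdGaussian (d : ℕ) : Measure (Fin d → ℝ) :=
  Measure.pi fun _ => ProbabilityTheory.gaussianReal 0 1

/-- ReLU activation. -/
def relu (t : ℝ) : ℝ := max t 0

/-- Euclidean inner product on `ℝ^d`. -/
noncomputable def dot {d : ℕ} (x y : Fin d → ℝ) : ℝ := ∑ i, x i * y i

/-- Euclidean norm on `ℝ^d`. -/
noncomputable def vnorm {d : ℕ} (x : Fin d → ℝ) : ℝ := Real.sqrt (∑ i, x i ^ 2)

/-- The neural tangent kernel `k(x,y) = E_Z[relu(⟨x,Z⟩) relu(⟨y,Z⟩)]`. -/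
noncomputable def ntk (d : ℕ) (x y : Fin d → ℝ) : ℝ :=
  ∫ z, relu (dot x z) * relu (dot y z) ∂ stdGaussian d

/-- The `n`-th term of the series part of the NTK expansion. -/
noncomputable def ntkTerm {d : ℕ} (x y : Fin d → ℝ) (n : ℕ) : ℝ :=
  (Nat.choose (2 * n) n : ℝ) * dot x y ^ (2 * n + 2) /
    (2 ^ (2 * n) * (2 * n + 1) * (2 * n + 2) * (vnorm x * vnorm y) ^ (2 * n + 1))

/-!
Only the Gram matrix of `x` and `y` enters the joint law of `(⟪x, Z⟫, ⟪y, Z⟫)`, so the kernel is a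
planar Gaussian integral. The integrand is homogeneous of degree two, and polar coordinates reduce
it to `∫ cos φ cos (φ - θ)` over the arc where both cosines are nonnegative, which gives
`k(x, y) = |x||y| / (2π) * (sin θ + (π - θ) cos θ)` with `θ` the angle between `x` and `y`.
With `t = cos θ` the bracket is `√(1 - t²) + t arcsin t + π t / 2`, whose second derivative is
`1 / √(1 - t²)`. Integrating the binomial series of the latter twice yields coefficients that are
`O(n⁻²)`, so the resulting expansion persists at the endpoints `|t| = 1`.
-/

open scoped RealInnerProductSpace

section PowerSeries

variable {ι : Type*} {a : ι → ℝ} {e : ι → ℕ}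

lemma hasSum_pow_succ_of_hasDerivAt {R : ℝ} {f F : ℝ → ℝ}
    (hf : ∀ t, |t| < R → HasSum (fun i => a i * t ^ e i) (f t))
    (hF : ∀ t, |t| < R → HasDerivAt F (f t) t) (hF0 : F 0 = 0) {t : ℝ} (ht : |t| < R) :
    HasSum (fun i => a i / (e i + 1) * t ^ (e i + 1)) (F t) := by
  obtain ⟨r, htr, hrR⟩ := exists_between ht
  have hr : 0 < r := (abs_nonneg t).trans_lt htr
  have hR {s : ℝ} (hs : s ∈ Set.Ioo (-r) r) : |s| < R := (abs_lt.2 hs).trans hrR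
  have hterm (i : ι) (s : ℝ) :
      HasDerivAt (fun s => a i / (e i + 1) * s ^ (e i + 1)) (a i * s ^ e i) s := by
    refine ((hasDerivAt_pow (e i + 1) s).const_mul _).congr_deriv ?_
    push_cast
    field_simp
  have hbound (i : ι) (s : ℝ) (hs : s ∈ Set.Ioo (-r) r) : ‖a i * s ^ e i‖ ≤ |a i * r ^ e i| := by
    rw [norm_mul, norm_pow, abs_mul, abs_pow, abs_of_pos hr, norm_eq_abs, norm_eq_abs]
    gcongr
    exact (abs_lt.2 hs).le
  have hdom : Summable fun i => |a i * r ^ e i| := (hf r (by rwa [abs_of_pos hr])).summable.abs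
  have hsummable0 : Summable fun i => a i / (e i + 1) * (0 : ℝ) ^ (e i + 1) := by simp
  have h0 : (0 : ℝ) ∈ Set.Ioo (-r) r := ⟨neg_lt_zero.2 hr, hr⟩
  have hderiv {s : ℝ} (hs : s ∈ Set.Ioo (-r) r) :
      HasDerivAt (fun s => ∑' i, a i / (e i + 1) * s ^ (e i + 1)) (f s) s := by
    rw [← (hf s (hR hs)).tsum_eq]
    exact hasDerivAt_tsum_of_isPreconnected hdom isOpen_Ioo isPreconnected_Ioo
      (fun i s _ => hterm i s) hbound h0 hsummable0 hs
  have heq : ∑' i, a i / (e i + 1) * t ^ (e i + 1) = F t :=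
    isOpen_Ioo.eqOn_of_deriv_eq isPreconnected_Ioo
      (fun s hs => (hderiv hs).differentiableAt.differentiableWithinAt)
      (fun s hs => (hF s (hR hs)).differentiableAt.differentiableWithinAt)
      (fun s hs => (hderiv hs).deriv.trans (hF s (hR hs)).deriv.symm) h0 (by simp [hF0])
      (abs_lt.1 htr)
  rw [← heq]
  exact (summable_of_summable_hasDerivAt_of_isPreconnected hdom isOpen_Ioo isPreconnected_Ioo
      (fun i s _ => hterm i s) hbound h0 hsummable0 (abs_lt.1 htr)).hasSum

lemma hasSum_pow_of_continuousOn_Icc {F : ℝ → ℝ} (ha : Summable a)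
    (hF : ContinuousOn F (Set.Icc (-1) 1))
    (h : ∀ t, |t| < 1 → HasSum (fun i => a i * t ^ e i) (F t)) {t : ℝ} (ht : |t| ≤ 1) :
    HasSum (fun i => a i * t ^ e i) (F t) := by
  have hbound (i : ι) (s : ℝ) (hs : s ∈ Set.Icc (-1) 1) : ‖a i * s ^ e i‖ ≤ |a i| := by
    rw [norm_mul, norm_pow, norm_eq_abs, norm_eq_abs]
    exact mul_le_of_le_one_right (abs_nonneg _) (pow_le_one₀ (abs_nonneg s) (abs_le.2 hs))
  have hcont : ContinuousOn (fun s => ∑' i, a i * s ^ e i) (Set.Icc (-1) 1) :=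
    continuousOn_tsum (fun i => by fun_prop) ha.abs hbound
  have heq : Set.EqOn (fun s => ∑' i, a i * s ^ e i) F (Set.Icc (-1) 1) :=
    Set.EqOn.of_subset_closure (fun s hs => (h s (abs_lt.2 hs)).tsum_eq) hcont hF
      Set.Ioo_subset_Icc_self (closure_Ioo (by norm_num)).ge
  rw [← heq (abs_le.1 ht)]
  exact (Summable.of_norm_bounded ha.abs fun i => hbound i t (abs_le.1 ht)).hasSum

end PowerSeries

lemma multichoose_one_half (n : ℕ) :
    Ring.multichoose (1 / 2 : ℝ) n = n.centralBinom / 4 ^ n := by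
  have hpoch : (ascPochhammer ℝ n).eval (1 / 2) = n.factorial * (n.centralBinom / 4 ^ n) := by
    induction n with
    | zero => simp
    | succ n ih =>
      have hrec : (n + 1 : ℝ) * (n + 1).centralBinom = 2 * (2 * n + 1) * n.centralBinom := by
        exact_mod_cast n.succ_mul_centralBinom_succ
      rw [ascPochhammer_succ_eval, ih, Nat.factorial_succ, pow_succ]
      push_cast
      linear_combination (-(n.factorial : ℝ) / (4 * 4 ^ n)) * hrec
  refine mul_left_cancel₀ (Nat.cast_ne_zero.2 n.factorial_ne_zero) ?_
  rw [← hpoch, ← nsmul_eq_mul, Ring.factorial_nsmul_multichoose_eq_ascPochhammer,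
    Polynomial.ascPochhammer_smeval_eq_eval]

lemma hasSum_multichoose_mul_pow (p : ℝ) {x : ℝ} (hx : |x| < 1) :
    HasSum (fun n => Ring.multichoose p n * x ^ n) (1 / (1 - x) ^ p) := by
  have h := (one_div_one_sub_rpow_hasFPowerSeriesOnBall_zero p).hasSum (y := x)
    (by simpa [enorm_eq_nnnorm, ← NNReal.coe_lt_coe] using hx)
  simpa [FormalMultilinearSeries.ofScalars_apply_eq, Ring.multichoose_eq, mul_comm] using h

lemma hasSum_one_div_sqrt_one_sub_sq {t : ℝ} (ht : |t| < 1) :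
    HasSum (fun n : ℕ => n.centralBinom / 4 ^ n * t ^ (2 * n)) (1 / √(1 - t ^ 2)) := by
  have h := hasSum_multichoose_mul_pow (1 / 2) (x := t ^ 2)
    (by rw [abs_pow]; exact pow_lt_one₀ (abs_nonneg t) ht two_ne_zero)
  simpa only [multichoose_one_half, ← pow_mul, ← sqrt_eq_rpow] using h

lemma hasSum_arcsin {t : ℝ} (ht : |t| < 1) :
    HasSum (fun n : ℕ => n.centralBinom / 4 ^ n / (2 * n + 1) * t ^ (2 * n + 1)) (arcsin t) := by
  have h := hasSum_pow_succ_of_hasDerivAt (fun _ => hasSum_one_div_sqrt_one_sub_sq)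
    (fun s hs => hasDerivAt_arcsin (abs_lt.1 hs).1.ne' (abs_lt.1 hs).2.ne) arcsin_zero ht
  simpa using h

lemma hasDerivAt_sqrt_one_sub_sq_add_mul_arcsin {t : ℝ} (ht : |t| < 1) :
    HasDerivAt (fun s => √(1 - s ^ 2) + s * arcsin s - 1) (arcsin t) t := by
  have hpos : 0 < 1 - t ^ 2 := by rwa [sub_pos, sq_lt_one_iff_abs_lt_one]
  have hsqrt := ((hasDerivAt_pow 2 t).const_sub 1).sqrt hpos.ne'
  have harcsin := hasDerivAt_arcsin (abs_lt.1 ht).1.ne' (abs_lt.1 ht).2.ne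
  refine ((hsqrt.add ((hasDerivAt_id t).mul harcsin)).sub_const 1).congr_deriv ?_
  simp only [id_eq]
  push_cast
  field_simp
  ring

/-- The Cho–Saul arc-cosine kernel of order one, as a function of the angle `θ` between the two
inputs: the angular factor of the Gaussian correlation of two ReLU ridge functions. -/
noncomputable def arccosKernel (θ : ℝ) : ℝ := sin θ + (π - θ) * cos θ

/-- The coefficient of `cos θ ^ (2 * n + 2)` in `arccosKernel θ`, obtained by integrating the
binomial series of `1 / √(1 - t ^ 2)` twice. The terms of degree `0` and `1` are not included. -/
noncomputable def arccosKernelCoeff (n : ℕ) : ℝ :=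
  n.centralBinom / 4 ^ n / (2 * n + 1) / (2 * n + 2)

lemma summable_arccosKernelCoeff : Summable arccosKernelCoeff := by
  have hsq : Summable fun n : ℕ => 1 / ((n + 1 : ℕ) : ℝ) ^ 2 :=
    (summable_nat_add_iff 1).2 (summable_one_div_nat_pow.2 one_lt_two)
  refine hsq.of_nonneg_of_le (fun n => by unfold arccosKernelCoeff; positivity) fun n => ?_
  have hle : (n.centralBinom : ℝ) / 4 ^ n ≤ 1 :=
    (div_le_one (by positivity)).2 (mod_cast n.centralBinom_le_four_pow)
  rw [arccosKernelCoeff, div_div]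
  gcongr
  push_cast
  nlinarith [(n.cast_nonneg : (0 : ℝ) ≤ n)]

lemma hasSum_arccosKernelCoeff_mul_pow {t : ℝ} (ht : |t| ≤ 1) :
    HasSum (fun n => arccosKernelCoeff n * t ^ (2 * n + 2)) (√(1 - t ^ 2) + t * arcsin t - 1) := by
  refine hasSum_pow_of_continuousOn_Icc (F := fun t => √(1 - t ^ 2) + t * arcsin t - 1)
    summable_arccosKernelCoeff (by fun_prop) (fun s hs => ?_) ht
  have h := hasSum_pow_succ_of_hasDerivAt (fun _ => hasSum_arcsin)
    (fun _ => hasDerivAt_sqrt_one_sub_sq_add_mul_arcsin) (by simp) hs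
  refine h.congr_fun fun n => ?_
  push_cast [arccosKernelCoeff]
  ring

lemma hasSum_arccosKernelCoeff_mul_cos_pow {θ : ℝ} (h0 : 0 ≤ θ) (hπ : θ ≤ π) :
    HasSum (fun n => arccosKernelCoeff n * cos θ ^ (2 * n + 2))
      (arccosKernel θ - π / 2 * cos θ - 1) := by
  have h := hasSum_arccosKernelCoeff_mul_pow (abs_cos_le_one θ)
  rw [← sin_eq_sqrt_one_sub_cos_sq h0 hπ, arcsin_eq_pi_div_two_sub_arccos, arccos_cos h0 hπ] at h
  convert h using 1
  rw [arccosKernel]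
  ring

lemma relu_mul_of_nonneg {r : ℝ} (hr : 0 ≤ r) (t : ℝ) : relu (r * t) = r * relu t := by
  rw [relu, relu, mul_max_of_nonneg _ _ hr, mul_zero]

lemma measurable_relu : Measurable relu := measurable_id.max measurable_const

lemma integral_cos_mul_cos_sub (a b α : ℝ) :
    ∫ θ in a..b, cos θ * cos (θ - α) =
      (b - a) * cos α / 2 + (sin (2 * b - α) - sin (2 * a - α)) / 4 := by
  have hderiv (θ : ℝ) : HasDerivAt (fun θ => θ * cos α / 2 + sin (2 * θ - α) / 4)
      (cos θ * cos (θ - α)) θ := by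
    have h := (((hasDerivAt_id θ).mul_const (cos α)).div_const 2).add
      (((((hasDerivAt_id θ).const_mul 2).sub_const α).sin).div_const 4)
    refine h.congr_deriv ?_
    have hadd : cos (2 * θ - α) = cos θ * cos (θ - α) - sin θ * sin (θ - α) := by
      rw [← cos_add]; ring_nf
    have hsub : cos α = cos θ * cos (θ - α) + sin θ * sin (θ - α) := by
      rw [← cos_sub]; ring_nf
    simp only [id_eq]
    linear_combination hadd / 2 + hsub / 2
  rw [intervalIntegral.integral_eq_sub_of_hasDerivAt (fun θ _ => hderiv θ)
    (Continuous.intervalIntegrable (by fun_prop) _ _)]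
  ring

lemma relu_cos_eq_zero {θ : ℝ} (h : π / 2 ≤ |θ|) (h' : |θ| ≤ 3 * π / 2) : relu (cos θ) = 0 :=
  max_eq_right <| by
    rw [← cos_abs]
    exact cos_nonpos_of_pi_div_two_le_of_le h (by linarith)

lemma relu_cos {θ : ℝ} (h : |θ| ≤ π / 2) : relu (cos θ) = cos θ :=
  max_eq_left <| by
    rw [← cos_abs]
    exact cos_nonneg_of_neg_pi_div_two_le_of_le (by linarith [abs_nonneg θ, pi_pos]) h

lemma integral_relu_cos_mul_relu_cos_sub {α : ℝ} (h0 : 0 ≤ α) (hπ : α ≤ π) :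
    ∫ θ in Set.Ioo (-π) π, relu (cos θ) * relu (cos (θ - α)) = arccosKernel α / 2 := by
  have hsub : Set.Ioc (α - π / 2) (π / 2) ⊆ Set.Ioo (-π) π := fun θ hθ =>
    ⟨by linarith [hθ.1, pi_pos], by linarith [hθ.2, pi_pos]⟩
  have hzero : ∀ θ ∈ Set.Ioo (-π) π \ Set.Ioc (α - π / 2) (π / 2),
      relu (cos θ) * relu (cos (θ - α)) = 0 := by
    rintro θ ⟨⟨hθ, hθ'⟩, hnot⟩
    rcases le_or_gt (π / 2) |θ| with h | h
    · rw [relu_cos_eq_zero h (by linarith [abs_lt.2 ⟨hθ, hθ'⟩, pi_pos]), zero_mul]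
    · obtain ⟨hlow, hup⟩ := abs_lt.1 h
      have hle : θ ≤ α - π / 2 := not_lt.1 fun hlt => hnot ⟨hlt, hup.le⟩
      have habs : |θ - α| = α - θ := by rw [abs_of_nonpos (by linarith [pi_pos]), neg_sub]
      rw [relu_cos_eq_zero (θ := θ - α) (by linarith) (by linarith), mul_zero]
  have hcos : Set.EqOn (fun θ => relu (cos θ) * relu (cos (θ - α)))
      (fun θ => cos θ * cos (θ - α)) (Set.Ioc (α - π / 2) (π / 2)) := fun θ ⟨hlow, hup⟩ => by
    simp only
    rw [relu_cos (abs_le.2 ⟨by linarith, hup⟩),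
      relu_cos (abs_le.2 ⟨by linarith, by linarith⟩)]
  rw [setIntegral_eq_of_subset_of_forall_sdiff_eq_zero measurableSet_Ioo hsub hzero,
    setIntegral_congr_fun measurableSet_Ioc hcos,
    ← intervalIntegral.integral_of_le (by linarith), integral_cos_mul_cos_sub,
    show 2 * (π / 2) - α = π - α by ring, show 2 * (α - π / 2) - α = -(π - α) by ring,
    sin_neg, sin_pi_sub, arccosKernel]
  ring

section Gaussian

variable {E : Type*} [NormedAddCommGroup E] [InnerProductSpace ℝ E]

lemma comp_innerSL_prod_innerSL (L : StrongDual ℝ (ℝ × ℝ)) (u v : E) :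
    L.comp ((innerSL ℝ u).prod (innerSL ℝ v)) = innerSL ℝ (L (1, 0) • u + L (0, 1) • v) := by
  ext z
  have hL (p : ℝ × ℝ) : L p = p.1 * L (1, 0) + p.2 * L (0, 1) := by
    conv_lhs => rw [show p = p.1 • (1, 0) + p.2 • (0, 1) by simp]
    rw [map_add, map_smul, map_smul, smul_eq_mul, smul_eq_mul]
  simp [hL (⟪u, z⟫, ⟪v, z⟫), mul_comm]

variable [FiniteDimensional ℝ E] [MeasurableSpace E] [BorelSpace E]
  {E' : Type*} [NormedAddCommGroup E'] [InnerProductSpace ℝ E'] [FiniteDimensional ℝ E']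
  [MeasurableSpace E'] [BorelSpace E']

lemma charFunDual_map_inner_inner_stdGaussian (u v : E) (L : StrongDual ℝ (ℝ × ℝ)) :
    charFunDual ((ProbabilityTheory.stdGaussian E).map fun z => (⟪u, z⟫, ⟪v, z⟫)) L =
      Complex.exp (-‖L (1, 0) • u + L (0, 1) • v‖ ^ 2 / 2) := by
  change charFunDual ((ProbabilityTheory.stdGaussian E).map
    ((innerSL ℝ u).prod (innerSL ℝ v))) L = _
  rw [charFunDual_map, ProbabilityTheory.charFunDual_stdGaussian, comp_innerSL_prod_innerSL,
    innerSL_apply_norm]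

lemma map_inner_inner_stdGaussian_congr {u v : E} {u' v' : E'} (hu : ‖u‖ = ‖u'‖)
    (hv : ‖v‖ = ‖v'‖) (huv : ⟪u, v⟫ = ⟪u', v'⟫) :
    (ProbabilityTheory.stdGaussian E).map (fun z => (⟪u, z⟫, ⟪v, z⟫)) =
      (ProbabilityTheory.stdGaussian E').map (fun z => (⟪u', z⟫, ⟪v', z⟫)) := by
  refine Measure.ext_of_charFunDual (funext fun L => ?_)
  have hnorm : ‖L (1, 0) • u + L (0, 1) • v‖ ^ 2 = ‖L (1, 0) • u' + L (0, 1) • v'‖ ^ 2 := by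
    simp only [norm_add_sq_real, norm_smul, real_inner_smul_left, real_inner_smul_right, hu, hv,
      huv]
  simp only [charFunDual_map_inner_inner_stdGaussian, ← Complex.ofReal_pow, hnorm]

lemma integral_comp_inner_inner_stdGaussian_congr {u v : E} {u' v' : E'} (hu : ‖u‖ = ‖u'‖)
    (hv : ‖v‖ = ‖v'‖) (huv : ⟪u, v⟫ = ⟪u', v'⟫) {f : ℝ × ℝ → ℝ} (hf : Measurable f) :
    ∫ z, f (⟪u, z⟫, ⟪v, z⟫) ∂ProbabilityTheory.stdGaussian E =
      ∫ z, f (⟪u', z⟫, ⟪v', z⟫) ∂ProbabilityTheory.stdGaussian E' := by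
  rw [← integral_map (by fun_prop) hf.aestronglyMeasurable,
    map_inner_inner_stdGaussian_congr hu hv huv,
    integral_map (by fun_prop) hf.aestronglyMeasurable]

variable (E) in
lemma integrable_exp_neg_norm_sq_div_two : Integrable fun x : E => exp (-‖x‖ ^ 2 / 2) := by
  have h := (GaussianFourier.integrable_cexp_neg_mul_sq_norm_add (V := E) (b := 1 / 2)
    (by norm_num) 0 0).norm
  refine h.congr (.of_forall fun x => ?_)
  have hexp : -(1 / 2) * (‖x‖ : ℂ) ^ 2 + 0 * (⟪(0 : E), x⟫ : ℂ) = (-‖x‖ ^ 2 / 2 : ℝ) := by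
    push_cast
    ring
  simp only [hexp, Complex.norm_exp_ofReal]

lemma integral_cexp_neg_norm_sq_div_two_add_inner_mul_I (t : E) :
    ∫ x : E, Complex.exp (-‖x‖ ^ 2 / 2 + ⟪x, t⟫ * Complex.I) =
      ((2 * π) ^ (Module.finrank ℝ E / 2 : ℝ) : ℝ) * Complex.exp (-‖t‖ ^ 2 / 2) := by
  have h := GaussianFourier.integral_cexp_neg_mul_sq_norm_add (V := E) (b := 1 / 2)
    (by norm_num) Complex.I t
  rw [Complex.ofReal_cpow (by positivity)]
  convert h using 2
  · ext x
    rw [real_inner_comm t x]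
    ring_nf
  · push_cast
    ring_nf
  · rw [Complex.I_sq]
    ring_nf

lemma stdGaussian_eq_withDensity :
    ProbabilityTheory.stdGaussian E = volume.withDensity fun x =>
      ENNReal.ofReal (exp (-‖x‖ ^ 2 / 2) / (2 * π) ^ (Module.finrank ℝ E / 2 : ℝ)) := by
  set c : ℝ := (2 * π) ^ (Module.finrank ℝ E / 2 : ℝ) with hc
  have hc0 : (c : ℂ) ≠ 0 := Complex.ofReal_ne_zero.2 (by positivity)
  have := isFiniteMeasure_withDensity_ofReal
    ((integrable_exp_neg_norm_sq_div_two E).div_const c).hasFiniteIntegral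
  refine Measure.ext_of_charFun (funext fun t => ?_)
  have hdensity (x : E) : (ENNReal.ofReal (exp (-‖x‖ ^ 2 / 2) / c)).toReal •
      Complex.exp (⟪x, t⟫ * Complex.I) =
        Complex.exp (-‖x‖ ^ 2 / 2 + ⟪x, t⟫ * Complex.I) / c := by
    rw [ENNReal.toReal_ofReal (by positivity), Complex.real_smul, Complex.exp_add]
    push_cast
    ring
  rw [ProbabilityTheory.charFun_stdGaussian, charFun_apply,
    integral_withDensity_eq_integral_toReal_smul (by fun_prop) (by simp)]
  simp_rw [hdensity]
  rw [integral_div, integral_cexp_neg_norm_sq_div_two_add_inner_mul_I, ← hc,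
    mul_div_cancel_left₀ _ hc0]

lemma integral_Ioi_rpow_mul_exp_neg_sq_div_two {q : ℝ} (hq : -1 < q) :
    ∫ r in Set.Ioi (0 : ℝ), r ^ q * exp (-r ^ 2 / 2) = 2 ^ ((q - 1) / 2) * Gamma ((q + 1) / 2) := by
  have h := integral_rpow_mul_exp_neg_mul_rpow (p := 2) (q := q) (b := 1 / 2)
    (by norm_num) hq (by norm_num)
  have hpow : (1 / 2 : ℝ) ^ (-(q + 1) / 2) * (1 / 2) = 2 ^ ((q - 1) / 2) := by
    rw [one_div, inv_rpow zero_le_two, ← rpow_neg zero_le_two, ← rpow_neg_one 2,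
      ← rpow_add zero_lt_two]
    ring_nf
  rw [hpow] at h
  rw [← h]
  congr! 4 with r
  rw [rpow_two]
  ring

lemma integral_stdGaussian_complex_of_homogeneous {p : ℝ} (hp : -2 < p) {F : ℂ → ℝ}
    (hF : ∀ r : ℝ, 0 < r → ∀ z, F (r * z) = r ^ p * F z) :
    ∫ z, F z ∂ProbabilityTheory.stdGaussian ℂ =
      2 ^ (p / 2) * Gamma (p / 2 + 1) / (2 * π) *
        ∫ θ in Set.Ioo (-π) π, F (Complex.exp (θ * Complex.I)) := by
  rw [stdGaussian_eq_withDensity,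
    integral_withDensity_eq_integral_toReal_smul (by fun_prop) (by simp),
    ← Complex.integral_comp_polarCoord_symm, polarCoord_target]
  calc ∫ q in Set.Ioi (0 : ℝ) ×ˢ Set.Ioo (-π) π, _
    _ = ∫ q in Set.Ioi (0 : ℝ) ×ˢ Set.Ioo (-π) π,
        q.1 ^ (p + 1) * exp (-q.1 ^ 2 / 2) / (2 * π) * F (Complex.exp (q.2 * Complex.I)) := by
      refine setIntegral_congr_fun (measurableSet_Ioi.prod measurableSet_Ioo) fun q hq => ?_
      have hr : 0 < q.1 := hq.1
      have hpolar : Complex.polarCoord.symm q = q.1 * Complex.exp (q.2 * Complex.I) := by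
        rw [Complex.polarCoord_symm_apply, Complex.exp_mul_I, Complex.ofReal_cos,
          Complex.ofReal_sin]
      rw [ENNReal.toReal_ofReal (by positivity), Complex.norm_polarCoord_symm, abs_of_pos hr,
        hpolar, hF q.1 hr, Complex.finrank_real_complex, rpow_add_one hr.ne', smul_eq_mul,
        smul_eq_mul, Nat.cast_ofNat, div_self two_ne_zero, rpow_one]
      ring
    _ = _ := by
      rw [Measure.volume_eq_prod,
        setIntegral_prod_mul (fun r : ℝ => r ^ (p + 1) * exp (-r ^ 2 / 2) / (2 * π))
          (fun θ : ℝ => F (Complex.exp (θ * Complex.I))),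
        integral_div, integral_Ioi_rpow_mul_exp_neg_sq_div_two (by linarith),
        add_sub_cancel_right, add_assoc, one_add_one_eq_two, add_div, div_self two_ne_zero]

lemma inner_mul_exp_mul_I (r s α β : ℝ) :
    ⟪(r * Complex.exp (α * Complex.I) : ℂ), s * Complex.exp (β * Complex.I)⟫ =
      r * s * cos (β - α) := by
  simp only [Complex.inner, map_mul, Complex.conj_ofReal, Complex.mul_re, Complex.mul_im,
    Complex.conj_re, Complex.conj_im, Complex.ofReal_re, Complex.ofReal_im,
    Complex.exp_ofReal_mul_I_re, Complex.exp_ofReal_mul_I_im, cos_sub]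
  ring

lemma integral_relu_inner_mul_relu_inner_stdGaussian_complex {r s α : ℝ} (hr : 0 ≤ r)
    (hs : 0 ≤ s) (h0 : 0 ≤ α) (hπ : α ≤ π) :
    ∫ z, relu ⟪(r : ℂ), z⟫ * relu ⟪s * Complex.exp (α * Complex.I), z⟫
        ∂ProbabilityTheory.stdGaussian ℂ =
      r * s / (2 * π) * arccosKernel α := by
  set u : ℂ := (r : ℂ)
  set v : ℂ := s * Complex.exp (α * Complex.I)
  have hhom (t : ℝ) (ht : 0 < t) (z : ℂ) :
      relu ⟪u, t * z⟫ * relu ⟪v, t * z⟫ = t ^ (2 : ℝ) * (relu ⟪u, z⟫ * relu ⟪v, z⟫) := by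
    rw [← Complex.real_smul, real_inner_smul_right, real_inner_smul_right,
      relu_mul_of_nonneg ht.le, relu_mul_of_nonneg ht.le, rpow_two]
    ring
  have hcircle (θ : ℝ) :
      relu ⟪u, Complex.exp (θ * Complex.I)⟫ * relu ⟪v, Complex.exp (θ * Complex.I)⟫ =
        r * s * (relu (cos θ) * relu (cos (θ - α))) := by
    have hinner_u : ⟪u, Complex.exp (θ * Complex.I)⟫ = r * cos θ := by
      simpa only [Complex.ofReal_zero, zero_mul, Complex.exp_zero, mul_one, Complex.ofReal_one,
        one_mul, sub_zero] using inner_mul_exp_mul_I r 1 0 θ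
    have hinner_v : ⟪v, Complex.exp (θ * Complex.I)⟫ = s * cos (θ - α) := by
      simpa only [Complex.ofReal_one, one_mul, mul_one] using inner_mul_exp_mul_I s 1 α θ
    rw [hinner_u, hinner_v, relu_mul_of_nonneg hr, relu_mul_of_nonneg hs]
    ring
  rw [integral_stdGaussian_complex_of_homogeneous (by norm_num) hhom]
  simp_rw [hcircle]
  rw [integral_const_mul, integral_relu_cos_mul_relu_cos_sub h0 hπ, div_self two_ne_zero, rpow_one,
    one_add_one_eq_two, Gamma_two]
  ring

open InnerProductGeometry in
lemma integral_relu_inner_mul_relu_inner_stdGaussian (u v : E) :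
    ∫ z, relu ⟪u, z⟫ * relu ⟪v, z⟫ ∂ProbabilityTheory.stdGaussian E =
      ‖u‖ * ‖v‖ / (2 * π) * arccosKernel (angle u v) := by
  have hinner : ⟪u, v⟫ = ⟪(‖u‖ : ℂ), ‖v‖ * Complex.exp (angle u v * Complex.I)⟫ := by
    rw [← cos_angle_mul_norm_mul_norm, mul_comm]
    simpa using (inner_mul_exp_mul_I ‖u‖ ‖v‖ 0 (angle u v)).symm
  have hrelu : Measurable fun q : ℝ × ℝ => relu q.1 * relu q.2 :=
    (measurable_relu.comp measurable_fst).mul (measurable_relu.comp measurable_snd)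
  rw [integral_comp_inner_inner_stdGaussian_congr (by simp)
      (by simp [Complex.norm_exp_ofReal_mul_I]) hinner hrelu,
    integral_relu_inner_mul_relu_inner_stdGaussian_complex (norm_nonneg u) (norm_nonneg v)
      (angle_nonneg u v) (angle_le_pi u v)]

end Gaussian

section Kernel

open InnerProductGeometry WithLp

variable {d : ℕ}

lemma dot_eq_inner (x y : Fin d → ℝ) : dot x y = ⟪toLp 2 x, toLp 2 y⟫ := by
  simp [dot, PiLp.inner_apply, mul_comm]

lemma vnorm_eq_norm (x : Fin d → ℝ) : vnorm x = ‖toLp 2 x‖ := by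
  simp [vnorm, EuclideanSpace.norm_eq]

lemma dot_eq_vnorm_mul_vnorm_mul_cos_angle (x y : Fin d → ℝ) :
    dot x y = vnorm x * vnorm y * cos (angle (toLp 2 x) (toLp 2 y)) := by
  rw [dot_eq_inner, vnorm_eq_norm, vnorm_eq_norm, mul_comm, cos_angle_mul_norm_mul_norm]

lemma ntk_eq_arccosKernel (x y : Fin d → ℝ) :
    ntk d x y = vnorm x * vnorm y / (2 * π) * arccosKernel (angle (toLp 2 x) (toLp 2 y)) := by
  rw [vnorm_eq_norm, vnorm_eq_norm, ← integral_relu_inner_mul_relu_inner_stdGaussian,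
    ← ProbabilityTheory.map_pi_eq_stdGaussian, ← MeasurableEquiv.coe_toLp, integral_map_equiv]
  simp [ntk, stdGaussian, dot_eq_inner]

lemma ntkTerm_eq {x y : Fin d → ℝ} (hx : x ≠ 0) (hy : y ≠ 0) (n : ℕ) :
    ntkTerm x y n = vnorm x * vnorm y *
      (arccosKernelCoeff n * cos (angle (toLp 2 x) (toLp 2 y)) ^ (2 * n + 2)) := by
  have hx' : vnorm x ≠ 0 := by simpa [vnorm_eq_norm] using hx
  have hy' : vnorm y ≠ 0 := by simpa [vnorm_eq_norm] using hy
  rw [ntkTerm, arccosKernelCoeff, dot_eq_vnorm_mul_vnorm_mul_cos_angle,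
    ← Nat.centralBinom_eq_two_mul_choose, pow_mul 2 2 n,
    show (2 : ℝ) ^ 2 = 4 by norm_num]
  field_simp
  ring

lemma hasSum_ntkTerm {x y : Fin d → ℝ} (hx : x ≠ 0) (hy : y ≠ 0) :
    HasSum (ntkTerm x y) (2 * π * ntk d x y - vnorm x * vnorm y - π / 2 * dot x y) := by
  have h := (hasSum_arccosKernelCoeff_mul_cos_pow (angle_nonneg (toLp 2 x) (toLp 2 y))
    (angle_le_pi (toLp 2 x) (toLp 2 y))).mul_left (vnorm x * vnorm y)
  have hsum : 2 * π * ntk d x y - vnorm x * vnorm y - π / 2 * dot x y =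
      vnorm x * vnorm y * (arccosKernel (angle (toLp 2 x) (toLp 2 y)) -
        π / 2 * cos (angle (toLp 2 x) (toLp 2 y)) - 1) := by
    rw [ntk_eq_arccosKernel, dot_eq_vnorm_mul_vnorm_mul_cos_angle]
    field_simp
    ring
  rw [hsum]
  exact h.congr_fun (ntkTerm_eq hx hy)

end Kernel

theorem ntk_expansion (d : ℕ) (hd : 1 ≤ d) (x y : Fin d → ℝ) (hx : x ≠ 0) (hy : y ≠ 0) :
    Summable (fun n : ℕ => |ntkTerm x y (n + 1)|) ∧
    ntk d x y =
      vnorm x * vnorm y / (2 * π) + dot x y / 4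
        + dot x y ^ 2 / (4 * π * (vnorm x * vnorm y))
        + (1 / (2 * π)) * ∑' n : ℕ, ntkTerm x y (n + 1) := by
  have h := hasSum_ntkTerm hx hy
  refine ⟨(summable_nat_add_iff 1).2 h.summable.abs, ?_⟩
  have hzero : ntkTerm x y 0 = dot x y ^ 2 / (2 * (vnorm x * vnorm y)) := by simp [ntkTerm]
  have htail : ∑' n, ntkTerm x y (n + 1) =
      2 * π * ntk d x y - vnorm x * vnorm y - π / 2 * dot x y -
        dot x y ^ 2 / (2 * (vnorm x * vnorm y)) := by
    rw [← hzero, ← h.tsum_eq, h.summable.tsum_eq_zero_add, add_sub_cancel_left]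
  rw [htail]
  field_simp
  ring
end

section
/- Let d ≥ 2 and let γ_d be the standard Gaussian measure on ℝ^d, with inner product ⟨f,g⟩ = ∫ f(x)g(x) dγ_d(x). Define F_0(x) = |x|/√d, F_l(x) = x_l for 1 ≤ l ≤ d, F_γ(x) = (√(d+2)/√2)·( x_γ²/|x| − |x|/d − (1/(√d+1))(x_d²/|x| − |x|/d) ) for 1 ≤ γ ≤ d−1, and F_{αβ}(x) = √(d+2)·x_α x_β/|x| for 1 ≤ α < β ≤ d. Then the family consisting of F_0, all F_l, all F_γ, and all F_{αβ} is an orthonormal system in L²(γ_d): each function has ⟨F,F⟩ = 1 and any two distinct functions in the family have ⟨F,G⟩ = 0. -/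
open MeasureTheory Real

noncomputable def F0 (d : ℕ) (x : Fin d → ℝ) : ℝ := vnorm x / Real.sqrt d

noncomputable def Fl (d : ℕ) (l : Fin d) (x : Fin d → ℝ) : ℝ := x l

/-- `F_γ`, where the last coordinate (index `d` in one-based notation) is `⟨d-1, _⟩`. -/
noncomputable def Fgam (d : ℕ) (hd : 0 < d) (γ : Fin d) (x : Fin d → ℝ) : ℝ :=
  (Real.sqrt (d + 2) / Real.sqrt 2) *
    (x γ ^ 2 / vnorm x - vnorm x / d
      - (1 / (Real.sqrt d + 1)) *
        (x ⟨d - 1, Nat.sub_lt hd one_pos⟩ ^ 2 / vnorm x - vnorm x / d))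

noncomputable def Fab (d : ℕ) (α β : Fin d) (x : Fin d → ℝ) : ℝ :=
  Real.sqrt (d + 2) * x α * x β / vnorm x

/-- Index set for the family: `F_0`, the `F_l` (`1 ≤ l ≤ d`), the `F_γ` (`1 ≤ γ ≤ d-1`),
and the `F_{αβ}` (`α < β`). -/
abbrev FamIdx (d : ℕ) : Type :=
  Unit ⊕ Fin d ⊕ Fin (d - 1) ⊕ { p : Fin d × Fin d // p.1 < p.2 }

/-- The whole family of functions. -/
noncomputable def Fam (d : ℕ) (hd : 2 ≤ d) : FamIdx d → (Fin d → ℝ) → ℝ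
  | Sum.inl _ => F0 d
  | Sum.inr (Sum.inl l) => Fl d l
  | Sum.inr (Sum.inr (Sum.inl γ)) => Fgam d (by omega) (Fin.castLE (Nat.sub_le d 1) γ)
  | Sum.inr (Sum.inr (Sum.inr p)) => Fab d p.1.1 p.1.2

/-!
The `F_l` are odd and all other members are even, of the form `q_A(x) = ⟨x, A x⟩ / |x|` for a
matrix `A`; moreover `x_l x_m = q_1 q_{E_lm}`. Thus only the integrals of `q_A q_B` matter, that is,
the fourth moments of the weight `|x|⁻²`. Since `γ_d` is invariant under the orthogonal group,
`∫ |x|⁻² ⟨u, x⟩⁴` is a constant times `|u|⁴`, and polarization gives the fourth moments up to that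
constant, which is then found by taking a trace:
`∫ q_A q_B = (tr A tr B + tr (A Bᵀ) + tr (A B)) / (d + 2)`, where only `∫ |x|² = d` enters.
The matrices of `F_0`, `F_γ` and `F_{αβ}` are orthogonal for this bilinear form. For the `F_γ` this
comes down to the orthonormality of the vectors `e_γ - c e_d`, `γ < d`, projected to `1^⊥`, which
holds for `c = 1 / (√d + 1)`.
-/

open scoped InnerProductSpace

lemma integral_eq_zero_of_odd {G F : Type*} [MeasurableSpace G] [AddGroup G] [MeasurableNeg G]
    {μ : Measure G} [μ.IsNegInvariant] [NormedAddCommGroup F] [NormedSpace ℝ F] {f : G → F}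
    (hf : f.Odd) : ∫ x, f x ∂μ = 0 := by
  have h : -∫ x, f x ∂μ = ∫ x, f x ∂μ := by
    simpa only [hf _, integral_neg] using integral_neg_eq_self f μ
  have htwo : (2 : ℝ) • ∫ x, f x ∂μ = 0 := by rw [two_smul, add_eq_zero_iff_eq_neg, h]
  exact (smul_eq_zero_iff_right two_ne_zero).mp htwo

section OrthogonallyInvariant

variable {E : Type*} [NormedAddCommGroup E] [InnerProductSpace ℝ E] [MeasurableSpace E]

/-- A measure on an inner product space is orthogonally invariant if every linear isometry of the
space onto itself preserves it. -/
def IsOrthogonallyInvariant (ν : Measure E) : Prop :=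
  ∀ T : E ≃ₗᵢ[ℝ] E, MeasurePreserving T ν ν

variable {ν : Measure E}

lemma IsOrthogonallyInvariant.isNegInvariant (hν : IsOrthogonallyInvariant ν) :
    ν.IsNegInvariant :=
  ⟨(hν (LinearIsometryEquiv.neg ℝ)).map_eq⟩

variable [BorelSpace E] {F : Type*} [NormedAddCommGroup F] [NormedSpace ℝ F]

lemma IsOrthogonallyInvariant.integral_comp (hν : IsOrthogonallyInvariant ν) (T : E ≃ₗᵢ[ℝ] E)
    (f : E → F) : ∫ x, f (T x) ∂ν = ∫ x, f x ∂ν :=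
  (hν T).integral_comp T.toHomeomorph.measurableEmbedding f

lemma IsOrthogonallyInvariant.integral_norm_inner_congr (hν : IsOrthogonallyInvariant ν)
    (f : ℝ → ℝ → F) {u v : E} (huv : ‖u‖ = ‖v‖) :
    ∫ x, f ‖x‖ ⟪u, x⟫_ℝ ∂ν = ∫ x, f ‖x‖ ⟪v, x⟫_ℝ ∂ν := by
  set T := (ℝ ∙ (u - v))ᗮ.reflection
  have hT : T u = v := Submodule.reflection_sub huv
  rw [← hν.integral_comp T fun x ↦ f ‖x‖ ⟪v, x⟫_ℝ, ← hT]
  simp only [T.norm_map, T.inner_map_map]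

end OrthogonallyInvariant

section FourthMoments

variable {E : Type*} [NormedAddCommGroup E] [InnerProductSpace ℝ E] [MeasurableSpace E]
  [BorelSpace E] {ν : Measure E} {ρ : ℝ → ℝ}

lemma integrable_radial_mul_inner (hρ : Integrable (fun x ↦ ρ ‖x‖ * ‖x‖ ^ 4) ν) (u v w z : E) :
    Integrable (fun x ↦ ρ ‖x‖ * (⟪u, x⟫_ℝ * ⟪v, x⟫_ℝ * (⟪w, x⟫_ℝ * ⟪z, x⟫_ℝ))) ν := by
  have inner_div_le (a x : E) : |⟪a, x⟫_ℝ / ‖x‖| ≤ ‖a‖ := by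
    rw [abs_div, abs_norm]
    exact div_le_of_le_mul₀ (norm_nonneg x) (norm_nonneg a) (abs_real_inner_le_norm a x)
  have hbdd : ∀ x, ‖⟪u, x⟫_ℝ / ‖x‖ * (⟪v, x⟫_ℝ / ‖x‖) * (⟪w, x⟫_ℝ / ‖x‖ * (⟪z, x⟫_ℝ / ‖x‖))‖
      ≤ ‖u‖ * ‖v‖ * (‖w‖ * ‖z‖) := fun x ↦ by
    simp only [norm_mul, Real.norm_eq_abs]
    gcongr <;> exact inner_div_le _ x
  have inner_div_mul (a x : E) : ⟪a, x⟫_ℝ / ‖x‖ * ‖x‖ = ⟪a, x⟫_ℝ :=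
    div_mul_cancel_of_imp fun h ↦ by simp [norm_eq_zero.mp h]
  refine (hρ.mul_bdd (Measurable.aestronglyMeasurable (by fun_prop)) (.of_forall hbdd)).congr
    (.of_forall fun x ↦ ?_)
  beta_reduce
  conv_rhs => rw [← inner_div_mul u, ← inner_div_mul v, ← inner_div_mul w, ← inner_div_mul z]
  ring

lemma IsOrthogonallyInvariant.exists_integral_radial_mul_inner_pow_four
    (hν : IsOrthogonallyInvariant ν) (ρ : ℝ → ℝ) :
    ∃ K : ℝ, ∀ u : E, ∫ x, ρ ‖x‖ * ⟪u, x⟫_ℝ ^ 4 ∂ν = 3 * K * ‖u‖ ^ 4 := by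
  rcases subsingleton_or_nontrivial E with _ | _
  · exact ⟨0, fun u ↦ by simp [Subsingleton.elim u 0]⟩
  obtain ⟨e, he⟩ := exists_norm_eq E zero_le_one
  refine ⟨(∫ x, ρ ‖x‖ * ⟪e, x⟫_ℝ ^ 4 ∂ν) / 3, fun u ↦ ?_⟩
  have hnorm : ‖u‖ = ‖‖u‖ • e‖ := by simp [norm_smul, he]
  rw [hν.integral_norm_inner_congr (fun r t ↦ ρ r * t ^ 4) hnorm, mul_div_cancel₀ _ three_ne_zero,
    ← integral_mul_const]
  simp only [real_inner_smul_left, mul_pow]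
  congr! 2
  ring

lemma integral_radial_mul_inner_sq_mul_inner_sq (hρ : Integrable (fun x ↦ ρ ‖x‖ * ‖x‖ ^ 4) ν)
    {K : ℝ} (hK : ∀ u : E, ∫ x, ρ ‖x‖ * ⟪u, x⟫_ℝ ^ 4 ∂ν = 3 * K * ‖u‖ ^ 4) (u v : E) :
    ∫ x, ρ ‖x‖ * (⟪u, x⟫_ℝ * ⟪u, x⟫_ℝ * (⟪v, x⟫_ℝ * ⟪v, x⟫_ℝ)) ∂ν =
      K * (⟪u, u⟫_ℝ * ⟪v, v⟫_ℝ + 2 * ⟪u, v⟫_ℝ ^ 2) := by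
  have hint (a : E) : Integrable (fun x ↦ ρ ‖x‖ * ⟪a, x⟫_ℝ ^ 4) ν :=
    (integrable_radial_mul_inner hρ a a a a).congr (.of_forall fun x ↦ by ring)
  have hpolar := calc
    12 * ∫ x, ρ ‖x‖ * (⟪u, x⟫_ℝ * ⟪u, x⟫_ℝ * (⟪v, x⟫_ℝ * ⟪v, x⟫_ℝ)) ∂ν
      = ∫ x, (ρ ‖x‖ * ⟪u + v, x⟫_ℝ ^ 4 + ρ ‖x‖ * ⟪u - v, x⟫_ℝ ^ 4)
          - (2 * (ρ ‖x‖ * ⟪u, x⟫_ℝ ^ 4) + 2 * (ρ ‖x‖ * ⟪v, x⟫_ℝ ^ 4)) ∂ν := by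
        rw [← integral_const_mul]
        simp only [inner_add_left, inner_sub_left]
        congr! 2
        ring
    _ = 3 * K * (‖u + v‖ ^ 4 + ‖u - v‖ ^ 4 - 2 * (‖u‖ ^ 4 + ‖v‖ ^ 4)) := by
        rw [integral_sub (by fun_prop) (by fun_prop), integral_add (hint _) (hint _),
          integral_add (by fun_prop) (by fun_prop)]
        simp only [integral_const_mul, hK]
        ring
  have hpow (a : E) : ‖a‖ ^ 4 = ⟪a, a⟫_ℝ ^ 2 := by rw [real_inner_self_eq_norm_sq]; ring
  simp only [hpow, inner_add_left, inner_add_right, inner_sub_left, inner_sub_right,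
    real_inner_comm u v] at hpolar
  linear_combination hpolar / 12

lemma integral_radial_mul_inner_mul_inner_mul_inner_sq
    (hρ : Integrable (fun x ↦ ρ ‖x‖ * ‖x‖ ^ 4) ν)
    {K : ℝ} (hK : ∀ u : E, ∫ x, ρ ‖x‖ * ⟪u, x⟫_ℝ ^ 4 ∂ν = 3 * K * ‖u‖ ^ 4) (u v w : E) :
    ∫ x, ρ ‖x‖ * (⟪u, x⟫_ℝ * ⟪v, x⟫_ℝ * (⟪w, x⟫_ℝ * ⟪w, x⟫_ℝ)) ∂ν =
      K * (⟪u, v⟫_ℝ * ⟪w, w⟫_ℝ + 2 * (⟪u, w⟫_ℝ * ⟪v, w⟫_ℝ)) := by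
  have hint := integrable_radial_mul_inner hρ
  have hpolar := calc
    4 * ∫ x, ρ ‖x‖ * (⟪u, x⟫_ℝ * ⟪v, x⟫_ℝ * (⟪w, x⟫_ℝ * ⟪w, x⟫_ℝ)) ∂ν
      = ∫ x, ρ ‖x‖ * (⟪u + v, x⟫_ℝ * ⟪u + v, x⟫_ℝ * (⟪w, x⟫_ℝ * ⟪w, x⟫_ℝ))
          - ρ ‖x‖ * (⟪u - v, x⟫_ℝ * ⟪u - v, x⟫_ℝ * (⟪w, x⟫_ℝ * ⟪w, x⟫_ℝ)) ∂ν := by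
        rw [← integral_const_mul]
        simp only [inner_add_left, inner_sub_left]
        congr! 2
        ring
    _ = K * (⟪u + v, u + v⟫_ℝ * ⟪w, w⟫_ℝ + 2 * ⟪u + v, w⟫_ℝ ^ 2)
          - K * (⟪u - v, u - v⟫_ℝ * ⟪w, w⟫_ℝ + 2 * ⟪u - v, w⟫_ℝ ^ 2) := by
        rw [integral_sub (hint _ _ _ _) (hint _ _ _ _)]
        simp only [integral_radial_mul_inner_sq_mul_inner_sq hρ hK]
  simp only [inner_add_left, inner_add_right, inner_sub_left, inner_sub_right,
    real_inner_comm u v] at hpolar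
  linear_combination hpolar / 4

lemma integral_radial_mul_four_inner_of_inner_pow_four
    (hρ : Integrable (fun x ↦ ρ ‖x‖ * ‖x‖ ^ 4) ν)
    {K : ℝ} (hK : ∀ u : E, ∫ x, ρ ‖x‖ * ⟪u, x⟫_ℝ ^ 4 ∂ν = 3 * K * ‖u‖ ^ 4) (u v w z : E) :
    ∫ x, ρ ‖x‖ * (⟪u, x⟫_ℝ * ⟪v, x⟫_ℝ * (⟪w, x⟫_ℝ * ⟪z, x⟫_ℝ)) ∂ν =
      K * (⟪u, v⟫_ℝ * ⟪w, z⟫_ℝ + ⟪u, w⟫_ℝ * ⟪v, z⟫_ℝ + ⟪u, z⟫_ℝ * ⟪v, w⟫_ℝ) := by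
  have hint := integrable_radial_mul_inner hρ
  have hpolar := calc
    4 * ∫ x, ρ ‖x‖ * (⟪u, x⟫_ℝ * ⟪v, x⟫_ℝ * (⟪w, x⟫_ℝ * ⟪z, x⟫_ℝ)) ∂ν
      = ∫ x, ρ ‖x‖ * (⟪u, x⟫_ℝ * ⟪v, x⟫_ℝ * (⟪w + z, x⟫_ℝ * ⟪w + z, x⟫_ℝ))
          - ρ ‖x‖ * (⟪u, x⟫_ℝ * ⟪v, x⟫_ℝ * (⟪w - z, x⟫_ℝ * ⟪w - z, x⟫_ℝ)) ∂ν := by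
        rw [← integral_const_mul]
        simp only [inner_add_left, inner_sub_left]
        congr! 2
        ring
    _ = K * (⟪u, v⟫_ℝ * ⟪w + z, w + z⟫_ℝ + 2 * (⟪u, w + z⟫_ℝ * ⟪v, w + z⟫_ℝ))
          - K * (⟪u, v⟫_ℝ * ⟪w - z, w - z⟫_ℝ + 2 * (⟪u, w - z⟫_ℝ * ⟪v, w - z⟫_ℝ)) := by
        rw [integral_sub (hint _ _ _ _) (hint _ _ _ _)]
        simp only [integral_radial_mul_inner_mul_inner_mul_inner_sq hρ hK]
  simp only [inner_add_left, inner_add_right, inner_sub_left, inner_sub_right,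
    real_inner_comm w z] at hpolar
  linear_combination hpolar / 4

theorem IsOrthogonallyInvariant.integral_radial_mul_four_inner
    [FiniteDimensional ℝ E] (hν : IsOrthogonallyInvariant ν)
    (hρ : Integrable (fun x ↦ ρ ‖x‖ * ‖x‖ ^ 4) ν) (u v w z : E) :
    Module.finrank ℝ E * (Module.finrank ℝ E + 2) *
        ∫ x, ρ ‖x‖ * (⟪u, x⟫_ℝ * ⟪v, x⟫_ℝ * (⟪w, x⟫_ℝ * ⟪z, x⟫_ℝ)) ∂ν =
      (∫ x, ρ ‖x‖ * ‖x‖ ^ 4 ∂ν) *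
        (⟪u, v⟫_ℝ * ⟪w, z⟫_ℝ + ⟪u, w⟫_ℝ * ⟪v, z⟫_ℝ + ⟪u, z⟫_ℝ * ⟪v, w⟫_ℝ) := by
  obtain ⟨K, hK⟩ := hν.exists_integral_radial_mul_inner_pow_four ρ
  have hmoment := integral_radial_mul_four_inner_of_inner_pow_four hρ hK
  let b := stdOrthonormalBasis ℝ E
  have hnorm (x : E) : ‖x‖ ^ 4 =
      ∑ i, ∑ j, ⟪b i, x⟫_ℝ * ⟪b i, x⟫_ℝ * (⟪b j, x⟫_ℝ * ⟪b j, x⟫_ℝ) := by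
    have h2 : ∑ i, ⟪b i, x⟫_ℝ * ⟪b i, x⟫_ℝ = ‖x‖ ^ 2 := by
      simpa [sq] using b.sum_sq_norm_inner_right x
    rw [← Finset.sum_mul_sum, h2]
    ring
  have hconst : ∫ x, ρ ‖x‖ * ‖x‖ ^ 4 ∂ν =
      Module.finrank ℝ E * (Module.finrank ℝ E + 2) * K := by
    simp only [hnorm, Finset.mul_sum]
    rw [integral_finsetSum _ fun i _ ↦ integrable_finsetSum _ fun j _ ↦
      integrable_radial_mul_inner hρ _ _ _ _]
    simp_rw [integral_finsetSum _ fun _ _ ↦ integrable_radial_mul_inner hρ _ _ _ _, hmoment,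
      b.inner_eq_ite]
    simp [← Finset.mul_sum, Finset.sum_add_distrib]
    ring
  rw [hmoment, hconst]
  ring

end FourthMoments

section StdGaussian

variable {E : Type*} [NormedAddCommGroup E] [InnerProductSpace ℝ E] [FiniteDimensional ℝ E]
  [MeasurableSpace E] [BorelSpace E]

lemma isOrthogonallyInvariant_stdGaussian :
    IsOrthogonallyInvariant (ProbabilityTheory.stdGaussian E) := fun T ↦
  ⟨T.continuous.measurable, ProbabilityTheory.stdGaussian_map T⟩

lemma integral_norm_sq_stdGaussian :
    ∫ x, ‖x‖ ^ 2 ∂(ProbabilityTheory.stdGaussian E) = Module.finrank ℝ E := by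
  let b := stdOrthonormalBasis ℝ E
  have hint (i) : Integrable (fun x ↦ ⟪b i, x⟫_ℝ ^ 2) (ProbabilityTheory.stdGaussian E) :=
    (ProbabilityTheory.IsGaussian.memLp_dual _ (innerSL ℝ (b i)) 2 (by simp)).integrable_sq
  have hvar (i) : ∫ x, ⟪b i, x⟫_ℝ ^ 2 ∂(ProbabilityTheory.stdGaussian E) = 1 := by
    have h := ProbabilityTheory.variance_dual_stdGaussian (innerSL ℝ (b i))
    rw [ProbabilityTheory.variance_of_integral_eq_zero (by fun_prop)
      (ProbabilityTheory.integral_strongDual_stdGaussian _)] at h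
    simpa using h
  have hnorm (x : E) : ‖x‖ ^ 2 = ∑ i, ⟪b i, x⟫_ℝ ^ 2 := by
    simpa using (b.sum_sq_norm_inner_right x).symm
  simp only [hnorm]
  rw [integral_finsetSum _ fun i _ ↦ hint i]
  simp [hvar]

end StdGaussian

section QuadRatio

open Matrix

variable {ι : Type*} [Fintype ι]

/-- The quadratic form of the matrix `A` divided by the norm, the even function
`x ↦ ⟨x, A x⟩ / |x|` which is homogeneous of degree one. It takes the value `0` at the origin. -/
noncomputable def quadRatio (A : Matrix ι ι ℝ) (x : EuclideanSpace ℝ ι) : ℝ :=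
  x.ofLp ⬝ᵥ A *ᵥ x.ofLp / ‖x‖

lemma quadRatio_smul_matrix (c : ℝ) (A : Matrix ι ι ℝ) (x : EuclideanSpace ℝ ι) :
    quadRatio (c • A) x = c * quadRatio A x := by
  simp [quadRatio, smul_mulVec, mul_div_assoc]

lemma quadRatio_neg (A : Matrix ι ι ℝ) (x : EuclideanSpace ℝ ι) :
    quadRatio A (-x) = quadRatio A x := by
  simp [quadRatio, mulVec_neg]

variable [DecidableEq ι]

lemma quadRatio_one (x : EuclideanSpace ℝ ι) : quadRatio 1 x = ‖x‖ := by
  have h : x.ofLp ⬝ᵥ x.ofLp = ‖x‖ * ‖x‖ := by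
    rw [← sq, EuclideanSpace.real_norm_sq_eq]
    simp [dotProduct, sq]
  rw [quadRatio, one_mulVec, h, mul_self_div_self]

lemma quadRatio_single (i j : ι) (x : EuclideanSpace ℝ ι) :
    quadRatio (single i j 1) x = x i * x j / ‖x‖ := by
  rw [quadRatio, single_mulVec, ← Pi.single, dotProduct_single, one_mul]

lemma quadRatio_diagonal (v : ι → ℝ) (x : EuclideanSpace ℝ ι) :
    quadRatio (diagonal v) x = (∑ i, v i * x i ^ 2) / ‖x‖ := by
  simp only [quadRatio, dotProduct, mulVec_diagonal]
  congr! 2 with i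
  ring

lemma quadRatio_one_mul_quadRatio_single (i j : ι) (x : EuclideanSpace ℝ ι) :
    quadRatio 1 x * quadRatio (single i j 1) x = x i * x j := by
  rw [quadRatio_one, quadRatio_single]
  exact mul_div_cancel_of_imp' fun h ↦ by simp [norm_eq_zero.mp h]

end QuadRatio

section TracePairing

open Matrix

variable {ι R : Type*} [Fintype ι] [CommSemiring R]

/-- The bilinear form on matrices which, up to a constant, is the `L²` inner product of the
associated `quadRatio`s for an orthogonally invariant measure. -/
def tracePairing (A B : Matrix ι ι R) : R :=
  A.trace * B.trace + (A * Bᵀ).trace + (A * B).trace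

lemma tracePairing_comm (A B : Matrix ι ι R) : tracePairing A B = tracePairing B A := by
  have h : (B * Aᵀ).trace = (A * Bᵀ).trace := by rw [← trace_transpose]; simp
  rw [tracePairing, tracePairing, h, trace_mul_comm A B, mul_comm]

lemma tracePairing_smul_left (c : R) (A B : Matrix ι ι R) :
    tracePairing (c • A) B = c * tracePairing A B := by
  simp only [tracePairing, trace_smul, smul_mul, smul_eq_mul]
  ring

lemma tracePairing_smul_right (c : R) (A B : Matrix ι ι R) :
    tracePairing A (c • B) = c * tracePairing A B := by
  rw [tracePairing_comm, tracePairing_smul_left, tracePairing_comm]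

variable [DecidableEq ι]

lemma tracePairing_one_left (B : Matrix ι ι R) :
    tracePairing 1 B = (Fintype.card ι + 2) * B.trace := by
  simp only [tracePairing, trace_one, one_mul, trace_transpose]
  ring

lemma tracePairing_diagonal_diagonal (v w : ι → R) :
    tracePairing (diagonal v) (diagonal w) = (∑ i, v i) * (∑ i, w i) + 2 * (v ⬝ᵥ w) := by
  simp only [tracePairing, trace_diagonal, diagonal_transpose, diagonal_mul_diagonal, dotProduct]
  ring

lemma tracePairing_diagonal_single (v : ι → R) {i j : ι} (hij : i ≠ j) :
    tracePairing (diagonal v) (single i j (1 : R)) = 0 := by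
  simp [tracePairing, trace_mul_single, trace_single_eq_of_ne _ _ _ hij, hij, hij.symm]

lemma tracePairing_single_single {i j : ι} (hij : i ≠ j) (k l : ι) :
    tracePairing (single i j (1 : R)) (single k l 1) =
      (if i = k ∧ j = l then 1 else 0) + if i = l ∧ j = k then 1 else 0 := by
  simp [tracePairing, trace_mul_single, trace_single_eq_of_ne _ _ _ hij, single_apply]

lemma tracePairing_eq_sum (A B : Matrix ι ι R) :
    tracePairing A B = ∑ p : ι × ι, ∑ q : ι × ι, A p.1 p.2 * B q.1 q.2 *
      ((if p.1 = p.2 then 1 else 0) * (if q.1 = q.2 then 1 else 0)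
        + (if p.1 = q.1 then 1 else 0) * (if p.2 = q.2 then 1 else 0)
        + (if p.1 = q.2 then 1 else 0) * (if p.2 = q.1 then 1 else 0)) := by
  simp [tracePairing, trace, mul_apply, Fintype.sum_prod_type, mul_add, Finset.sum_add_distrib,
    Finset.sum_mul_sum]

end TracePairing

section QuadRatioIntegrals

open Matrix

variable {ι : Type*} [Fintype ι]

lemma quadRatio_mul_quadRatio (A B : Matrix ι ι ℝ) (x : EuclideanSpace ℝ ι) :
    quadRatio A x * quadRatio B x = ∑ p : ι × ι, ∑ q : ι × ι, A p.1 p.2 * B q.1 q.2 *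
      ((‖x‖ ^ 2)⁻¹ * (x p.1 * x p.2 * (x q.1 * x q.2))) := by
  have hquad (C : Matrix ι ι ℝ) : quadRatio C x =
      ∑ p : ι × ι, C p.1 p.2 * (x p.1 * x p.2 / ‖x‖) := by
    simp only [quadRatio, dotProduct, mulVec, Finset.mul_sum, Finset.sum_div, Fintype.sum_prod_type]
    congr! 2
    ring
  rw [hquad, hquad, Finset.sum_mul_sum]
  congr! 2
  ring

variable {ν : Measure (EuclideanSpace ℝ ι)}

theorem IsOrthogonallyInvariant.integral_quadRatio_mul_quadRatio
    (hν : IsOrthogonallyInvariant ν) (hint : Integrable (fun x ↦ ‖x‖ ^ 2) ν)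
    (A B : Matrix ι ι ℝ) :
    Fintype.card ι * (Fintype.card ι + 2) * ∫ x, quadRatio A x * quadRatio B x ∂ν =
      (∫ x, ‖x‖ ^ 2 ∂ν) * tracePairing A B := by
  classical
  have hρ (x : EuclideanSpace ℝ ι) : (‖x‖ ^ 2)⁻¹ * ‖x‖ ^ 4 = ‖x‖ ^ 2 := by
    rcases eq_or_ne ‖x‖ 0 with h | h
    · simp [h]
    · field_simp
  have hintρ : Integrable (fun x ↦ (‖x‖ ^ 2)⁻¹ * ‖x‖ ^ 4) ν := by simpa only [hρ]
  have hcoord (x : EuclideanSpace ℝ ι) (i : ι) : x i = ⟪EuclideanSpace.basisFun ι ℝ i, x⟫_ℝ := by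
    simp [EuclideanSpace.inner_single_left]
  have hterm (p q : ι × ι) : Integrable (fun x : EuclideanSpace ℝ ι ↦
      A p.1 p.2 * B q.1 q.2 * ((‖x‖ ^ 2)⁻¹ * (x p.1 * x p.2 * (x q.1 * x q.2)))) ν := by
    simp only [hcoord]
    exact (integrable_radial_mul_inner (ρ := fun r ↦ (r ^ 2)⁻¹) hintρ _ _ _ _).const_mul _
  have hmoment := hν.integral_radial_mul_four_inner (ρ := fun r ↦ (r ^ 2)⁻¹) hintρ
  simp only [hρ, finrank_euclideanSpace] at hmoment
  simp only [quadRatio_mul_quadRatio]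
  rw [integral_finsetSum _ fun p _ ↦ integrable_finsetSum _ fun q _ ↦ hterm p q]
  simp_rw [integral_finsetSum _ fun q _ ↦ hterm _ q, integral_const_mul, tracePairing_eq_sum,
    Finset.mul_sum]
  congr! 2 with p _ q
  rw [mul_left_comm]
  simp only [hcoord, hmoment, OrthonormalBasis.inner_eq_ite]
  ring

theorem IsOrthogonallyInvariant.integral_quadRatio_mul_quadRatio_of_normalized [Nonempty ι]
    (hν : IsOrthogonallyInvariant ν) (hnorm : ∫ x, ‖x‖ ^ 2 ∂ν = Fintype.card ι)
    (A B : Matrix ι ι ℝ) :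
    ∫ x, quadRatio A x * quadRatio B x ∂ν = tracePairing A B / (Fintype.card ι + 2) := by
  have hcard : (Fintype.card ι : ℝ) ≠ 0 := by simp
  have hint : Integrable (fun x ↦ ‖x‖ ^ 2) ν := .of_integral_ne_zero (by rwa [hnorm])
  have h := hν.integral_quadRatio_mul_quadRatio hint A B
  rw [hnorm, mul_assoc] at h
  rw [eq_div_iff (by positivity), mul_comm]
  exact mul_left_cancel₀ hcard h

lemma IsOrthogonallyInvariant.integral_coord_mul_coord [DecidableEq ι]
    (hν : IsOrthogonallyInvariant ν) (hnorm : ∫ x, ‖x‖ ^ 2 ∂ν = Fintype.card ι) (i j : ι) :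
    ∫ x, x i * x j ∂ν = if i = j then 1 else 0 := by
  have : Nonempty ι := ⟨i⟩
  simp_rw [← quadRatio_one_mul_quadRatio_single]
  rw [hν.integral_quadRatio_mul_quadRatio_of_normalized hnorm, tracePairing_one_left,
    mul_div_cancel_left₀ _ (by positivity)]
  split_ifs with h
  · rw [h, trace_single_eq_same]
  · exact trace_single_eq_of_ne _ _ _ h

lemma IsOrthogonallyInvariant.integral_coord_mul_quadRatio (hν : IsOrthogonallyInvariant ν)
    (i : ι) (A : Matrix ι ι ℝ) : ∫ x, x i * quadRatio A x ∂ν = 0 :=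
  have := hν.isNegInvariant
  integral_eq_zero_of_odd fun x ↦ by simp [quadRatio_neg]

end QuadRatioIntegrals

section Contrast

variable {ι : Type*} [Fintype ι] [DecidableEq ι]

/-- The part orthogonal to `1` of `e_γ - c e_l`, where `c = 1 / (√n + 1)` and `n` is the dimension.
For a fixed index `l`, the `contrast l γ` with `γ ≠ l` form an orthonormal basis of the vectors
with zero sum. -/
noncomputable def contrast (l γ : ι) : ι → ℝ :=
  Pi.single γ 1 - (1 / (√(Fintype.card ι) + 1)) • Pi.single l 1
    - Function.const ι ((1 - 1 / (√(Fintype.card ι) + 1)) / Fintype.card ι)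

lemma sum_contrast (l γ : ι) : ∑ i, contrast l γ i = 0 := by
  have : Nonempty ι := ⟨l⟩
  have hcard : (Fintype.card ι : ℝ) ≠ 0 := by simp
  simp [contrast, Finset.sum_sub_distrib, ← Finset.mul_sum, mul_div_cancel₀ _ hcard]

lemma contrast_dotProduct_contrast {l γ δ : ι} (hγ : γ ≠ l) (hδ : δ ≠ l) :
    contrast l γ ⬝ᵥ contrast l δ = if γ = δ then 1 else 0 := by
  have : Nonempty ι := ⟨l⟩
  have hcard : (Fintype.card ι : ℝ) ≠ 0 := by simp
  set c : ℝ := 1 / (√(Fintype.card ι) + 1) with hc_def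
  -- The equation that determines `c`.
  have hc : (1 - c) ^ 2 / Fintype.card ι = c ^ 2 := by
    have hsq := Real.sq_sqrt (Nat.cast_nonneg (α := ℝ) (Fintype.card ι))
    rw [hc_def]
    field_simp
    linear_combination hsq
  have hconst (r : ℝ) : contrast l γ ⬝ᵥ Function.const ι r = 0 := by
    simp [dotProduct, ← Finset.sum_mul, sum_contrast]
  nth_rw 2 [contrast]
  rw [dotProduct_sub, hconst, sub_zero, dotProduct_sub, dotProduct_smul, dotProduct_single_one,
    dotProduct_single_one]
  simp only [contrast, ← hc_def, Pi.sub_apply, Pi.smul_apply, Pi.single_apply, Function.const_apply,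
    smul_eq_mul, hδ, hγ.symm, eq_comm (a := δ), if_true, if_false]
  linear_combination -hc

end Contrast

section Family

open Matrix

lemma vnorm_ofLp {d : ℕ} (x : EuclideanSpace ℝ (Fin d)) : vnorm x.ofLp = ‖x‖ := by
  simp [vnorm, EuclideanSpace.norm_eq]

lemma integral_stdGaussian_eq {d : ℕ} {F : Type*} [NormedAddCommGroup F] [NormedSpace ℝ F]
    (f : (Fin d → ℝ) → F) :
    ∫ x, f x ∂stdGaussian d =
      ∫ x, f x.ofLp ∂ProbabilityTheory.stdGaussian (EuclideanSpace ℝ (Fin d)) := by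
  rw [← ProbabilityTheory.map_pi_eq_stdGaussian]
  exact ((MeasurableEquiv.toLp 2 (Fin d → ℝ)).measurableEmbedding.integral_map
    fun x ↦ f x.ofLp).symm

lemma F0_ofLp {d : ℕ} (x : EuclideanSpace ℝ (Fin d)) :
    F0 d x.ofLp = quadRatio ((√d)⁻¹ • 1) x := by
  rw [F0, vnorm_ofLp, quadRatio_smul_matrix, quadRatio_one, div_eq_inv_mul]

lemma Fgam_ofLp {d : ℕ} (hd : 0 < d) (γ : Fin d) (x : EuclideanSpace ℝ (Fin d)) :
    Fgam d hd γ x.ofLp = quadRatio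
      ((√(d + 2) / √2) • diagonal (contrast ⟨d - 1, Nat.sub_lt hd one_pos⟩ γ)) x := by
  have hnorm : ‖x‖ ^ 2 / ‖x‖ = ‖x‖ := by rw [sq, mul_self_div_self]
  have hsum : ∑ i, contrast ⟨d - 1, Nat.sub_lt hd one_pos⟩ γ i * x i ^ 2 =
      x γ ^ 2 - 1 / (√d + 1) * x ⟨d - 1, Nat.sub_lt hd one_pos⟩ ^ 2
        - (1 - 1 / (√d + 1)) / d * ‖x‖ ^ 2 := by
    simp [contrast, sub_mul, Finset.sum_sub_distrib, ← Finset.mul_sum, Pi.single_apply,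
      ← EuclideanSpace.real_norm_sq_eq]
  rw [Fgam, vnorm_ofLp, quadRatio_smul_matrix, quadRatio_diagonal, hsum]
  linear_combination √(d + 2) / √2 * ((1 - 1 / (√d + 1)) / d) * hnorm

lemma Fab_ofLp {d : ℕ} (α β : Fin d) (x : EuclideanSpace ℝ (Fin d)) :
    Fab d α β x.ofLp = quadRatio (√(d + 2) • single α β 1) x := by
  rw [Fab, vnorm_ofLp, quadRatio_smul_matrix, quadRatio_single]
  ring

/-- The indices of the even members `F_0`, `F_γ`, `F_{αβ}` of the family. -/
abbrev EvenIdx (d : ℕ) : Type :=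
  Unit ⊕ Fin (d - 1) ⊕ { p : Fin d × Fin d // p.1 < p.2 }

/-- The inclusion of the indices of the even members into those of the whole family. -/
def EvenIdx.toFamIdx {d : ℕ} : EvenIdx d → FamIdx d := Sum.map id Sum.inr

lemma EvenIdx.toFamIdx_injective {d : ℕ} : (toFamIdx (d := d)).Injective :=
  Function.injective_id.sumMap Sum.inr_injective

lemma exists_eq_linear_or_eq_toFamIdx {d : ℕ} (i : FamIdx d) :
    (∃ l, i = Sum.inr (Sum.inl l)) ∨ ∃ k : EvenIdx d, i = k.toFamIdx := by
  rcases i with u | l | k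
  · exact .inr ⟨Sum.inl u, rfl⟩
  · exact .inl ⟨l, rfl⟩
  · exact .inr ⟨Sum.inr k, rfl⟩

/-- The matrix `A` for which a given even member of the family is `quadRatio A`. -/
noncomputable def evenMatrix {d : ℕ} (hd : 2 ≤ d) : EvenIdx d → Matrix (Fin d) (Fin d) ℝ
  | Sum.inl _ => (√d)⁻¹ • 1
  | Sum.inr (Sum.inl γ) => (√(d + 2) / √2) •
      diagonal (contrast ⟨d - 1, by omega⟩ (Fin.castLE (Nat.sub_le d 1) γ))
  | Sum.inr (Sum.inr p) => √(d + 2) • single p.1.1 p.1.2 1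

lemma Fam_linear {d : ℕ} (hd : 2 ≤ d) (l : Fin d) (x : Fin d → ℝ) :
    Fam d hd (Sum.inr (Sum.inl l)) x = x l := rfl

lemma Fam_toFamIdx {d : ℕ} (hd : 2 ≤ d) (k : EvenIdx d) (x : EuclideanSpace ℝ (Fin d)) :
    Fam d hd k.toFamIdx x.ofLp = quadRatio (evenMatrix hd k) x := by
  rcases k with _ | γ | p
  · exact F0_ofLp x
  · exact Fgam_ofLp (by omega) _ x
  · exact Fab_ofLp _ _ x

lemma trace_evenMatrix_inr {d : ℕ} (hd : 2 ≤ d)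
    (k : Fin (d - 1) ⊕ { p : Fin d × Fin d // p.1 < p.2 }) :
    (evenMatrix hd (Sum.inr k)).trace = 0 := by
  rcases k with γ | p
  · simp [evenMatrix, sum_contrast]
  · simp [evenMatrix, trace_single_eq_of_ne _ _ _ p.2.ne]

lemma tracePairing_evenMatrix_inl {d : ℕ} (hd : 2 ≤ d) (u : Unit) (k : EvenIdx d) :
    tracePairing (evenMatrix hd (Sum.inl u)) (evenMatrix hd k) =
      if Sum.inl u = k then (d : ℝ) + 2 else 0 := by
  rw [evenMatrix, tracePairing_smul_left, tracePairing_one_left, Fintype.card_fin]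
  rcases k with v | k
  · have hsq : (√d)⁻¹ * (√d)⁻¹ * d = 1 := by
      rw [← mul_inv, Real.mul_self_sqrt (by positivity), inv_mul_cancel₀ (by positivity)]
    simp only [evenMatrix, trace_smul, trace_one, Fintype.card_fin, smul_eq_mul, if_true]
    linear_combination (d + 2 : ℝ) * hsq
  · simp [trace_evenMatrix_inr]

lemma tracePairing_evenMatrix_diagonal {d : ℕ} (hd : 2 ≤ d) (γ δ : Fin (d - 1)) :
    tracePairing (evenMatrix hd (Sum.inr (Sum.inl γ))) (evenMatrix hd (Sum.inr (Sum.inl δ))) =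
      if γ = δ then (d : ℝ) + 2 else 0 := by
  have hlast (γ : Fin (d - 1)) :
      Fin.castLE (Nat.sub_le d 1) γ ≠ ⟨d - 1, by omega⟩ :=
    Fin.ne_of_lt γ.2
  have hsq : √(d + 2 : ℝ) / √2 * (√(d + 2) / √2) * 2 = d + 2 := by
    rw [div_mul_div_comm, Real.mul_self_sqrt (by positivity), Real.mul_self_sqrt two_pos.le,
      div_mul_cancel₀ _ two_ne_zero]
  rw [evenMatrix, evenMatrix, tracePairing_smul_left, tracePairing_smul_right,
    tracePairing_diagonal_diagonal, sum_contrast,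
    contrast_dotProduct_contrast (hlast γ) (hlast δ)]
  simp only [(Fin.castLE_injective _).eq_iff]
  split_ifs
  · linear_combination hsq
  · ring

lemma tracePairing_evenMatrix_diagonal_single {d : ℕ} (hd : 2 ≤ d) (γ : Fin (d - 1))
    (p : { p : Fin d × Fin d // p.1 < p.2 }) :
    tracePairing (evenMatrix hd (Sum.inr (Sum.inl γ))) (evenMatrix hd (Sum.inr (Sum.inr p))) =
      0 := by
  rw [evenMatrix, evenMatrix, tracePairing_smul_left, tracePairing_smul_right,
    tracePairing_diagonal_single _ p.2.ne, mul_zero, mul_zero]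

lemma tracePairing_evenMatrix_single {d : ℕ} (hd : 2 ≤ d)
    (p q : { p : Fin d × Fin d // p.1 < p.2 }) :
    tracePairing (evenMatrix hd (Sum.inr (Sum.inr p))) (evenMatrix hd (Sum.inr (Sum.inr q))) =
      if p = q then (d : ℝ) + 2 else 0 := by
  have hswap : ¬(p.1.1 = q.1.2 ∧ p.1.2 = q.1.1) := fun ⟨h₁, h₂⟩ ↦
    lt_asymm q.2 (h₁ ▸ h₂ ▸ p.2)
  rw [evenMatrix, evenMatrix, tracePairing_smul_left, tracePairing_smul_right,
    tracePairing_single_single p.2.ne, if_neg hswap, add_zero, ← mul_assoc,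
    Real.mul_self_sqrt (by positivity), mul_ite, mul_one, mul_zero]
  simp only [Subtype.ext_iff, Prod.ext_iff]

lemma tracePairing_evenMatrix {d : ℕ} (hd : 2 ≤ d) (k m : EvenIdx d) :
    tracePairing (evenMatrix hd k) (evenMatrix hd m) = if k = m then (d : ℝ) + 2 else 0 := by
  rcases k with u | γ | p
  · exact tracePairing_evenMatrix_inl hd u m
  all_goals rcases m with v | δ | q
  · simpa [tracePairing_comm] using tracePairing_evenMatrix_inl hd v (Sum.inr (Sum.inl γ))
  · simpa using tracePairing_evenMatrix_diagonal hd γ δ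
  · simpa using tracePairing_evenMatrix_diagonal_single hd γ q
  · rw [tracePairing_comm]
    simpa using tracePairing_evenMatrix_inl hd v (Sum.inr (Sum.inr p))
  · rw [tracePairing_comm]
    simpa using tracePairing_evenMatrix_diagonal_single hd δ p
  · simpa using tracePairing_evenMatrix_single hd p q

lemma EvenIdx.toFamIdx_ne_linear {d : ℕ} (k : EvenIdx d) (l : Fin d) :
    k.toFamIdx ≠ Sum.inr (Sum.inl l) := by
  rcases k with _ | _ | _ <;> simp [toFamIdx]

theorem family_orthonormal_general (d : ℕ) (hd : 2 ≤ d) (ν : Measure (EuclideanSpace ℝ (Fin d)))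
    (hν : IsOrthogonallyInvariant ν) (hnorm : ∫ x, ‖x‖ ^ 2 ∂ν = d) (i j : FamIdx d) :
    ∫ x, Fam d hd i x.ofLp * Fam d hd j x.ofLp ∂ν = if i = j then 1 else 0 := by
  have : NeZero d := ⟨by omega⟩
  have hcard : ∫ x, ‖x‖ ^ 2 ∂ν = Fintype.card (Fin d) := by rw [hnorm, Fintype.card_fin]
  rcases exists_eq_linear_or_eq_toFamIdx i with ⟨l, rfl⟩ | ⟨k, rfl⟩ <;>
    rcases exists_eq_linear_or_eq_toFamIdx j with ⟨m, rfl⟩ | ⟨n, rfl⟩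
  · simpa [Fam_linear] using hν.integral_coord_mul_coord hcard l m
  · rw [if_neg (n.toFamIdx_ne_linear l).symm]
    simpa only [Fam_toFamIdx, Fam_linear] using hν.integral_coord_mul_quadRatio l _
  · rw [if_neg (k.toFamIdx_ne_linear m)]
    simpa only [Fam_toFamIdx, Fam_linear, mul_comm] using hν.integral_coord_mul_quadRatio m _
  · simp only [Fam_toFamIdx]
    rw [hν.integral_quadRatio_mul_quadRatio_of_normalized hcard, tracePairing_evenMatrix, ite_div,
      Fintype.card_fin, zero_div, div_self (by positivity)]
    simp only [EvenIdx.toFamIdx_injective.eq_iff]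

end Family

theorem family_orthonormal (d : ℕ) (hd : 2 ≤ d) (i j : FamIdx d) :
    ∫ x, Fam d hd i x * Fam d hd j x ∂ stdGaussian d = if i = j then 1 else 0 := by
  rw [integral_stdGaussian_eq]
  exact family_orthonormal_general d hd _ isOrthogonallyInvariant_stdGaussian
    (by simp [integral_norm_sq_stdGaussian]) i j
end
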